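/- arXiv:1707.09302 — 4 statements merged into one kernel-verified Lean document; each statement's English description precedes it below -/
import Mathlib

section
/- Let A be a unital associative algebra over ℂ, and let a = (a_j), c = (c_ℓ), d = (d_r) be finite families of elements of A such that [a_j, a_k] is a scalar multiple of the identity for all j, k, and [a_j, c_ℓ] = 2i(Θ₁₁)_{jℓ}·1, [a_j, d_r] = 2i(Θ₁₂)_{jr}·1 for real matrices Θ₁₁, Θ₁₂. Then for any complex square matrix F and complex matrix G of compatible dimensions, [aᵀFa, cᵀGd] = 4i ( aᵀ S(F) Θ₁₁ G d + cᵀ G Θ₁₂ᵀ S(F) a ), where S(F) := (F + Fᵀ)/2 is the symmetrizer. -/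
open Matrix

/-!
Write `[x, y]` for the commutator and `Q = aᵀFa`. Since `[Q, ·]` is a derivation,
`[Q, cᵀGd] = [Q, c]ᵀGd + cᵀG[Q, d]`. Commuting with a fixed `x` is a derivation as well, so if the
`[a_j, x] = t_j` are scalars, then `[Q, x] = tᵀFa + aᵀFt` is the linear form in `a` with coefficient
vector `(F + Fᵀ)t`. Hence `[Q, c] = Θ₁ᵀ(F + Fᵀ)a` and `[Q, d] = Θ₂ᵀ(F + Fᵀ)a`, where `Θ₁` and `Θ₂`
collect the scalars `[a_j, c_ℓ]` and `[a_j, d_r]`.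
-/

section BilinearForm

variable {R A m n p : Type*} [CommSemiring R] [Semiring A] [Algebra R A]
  [Fintype m] [Fintype n] [Fintype p]

/-- The element `xᵀMy` of an `R`-algebra, for a scalar matrix `M` and finite families `x`, `y` of
algebra elements. A quadratic form is the case `x = y`. -/
def bilinearForm (M : Matrix m n R) (x : m → A) (y : n → A) : A :=
  ∑ i, ∑ j, M i j • (x i * y j)

theorem bilinearForm_smul (r : R) (M : Matrix m n R) (x : m → A) (y : n → A) :
    bilinearForm (r • M) x y = r • bilinearForm M x y := by
  simp only [bilinearForm, Matrix.smul_apply, smul_assoc, Finset.smul_sum]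

theorem bilinearForm_sum_smul_left (M : Matrix m n R) (N : Matrix m p R) (x : p → A) (y : n → A) :
    bilinearForm M (fun i => ∑ k, N i k • x k) y = bilinearForm (Nᵀ * M) x y := by
  simp only [bilinearForm, Finset.sum_mul, Finset.smul_sum, smul_mul_assoc, smul_smul,
    Matrix.mul_apply, transpose_apply, Finset.sum_smul]
  calc ∑ i, ∑ j, ∑ k, (M i j * N i k) • (x k * y j)
      = ∑ j, ∑ k, ∑ i, (M i j * N i k) • (x k * y j) := by
        rw [Finset.sum_comm]
        exact Finset.sum_congr rfl fun _ _ => Finset.sum_comm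
    _ = ∑ k, ∑ j, ∑ i, (N i k * M i j) • (x k * y j) := by
        rw [Finset.sum_comm]
        simp only [mul_comm]

theorem bilinearForm_sum_smul_right (M : Matrix m n R) (N : Matrix n p R) (x : m → A) (y : p → A) :
    bilinearForm M x (fun j => ∑ k, N j k • y k) = bilinearForm (M * N) x y := by
  simp only [bilinearForm, Finset.mul_sum, Finset.smul_sum, mul_smul_comm, smul_smul,
    Matrix.mul_apply, Finset.sum_smul]
  exact Finset.sum_congr rfl fun _ _ => Finset.sum_comm

theorem bilinearForm_smul_one_left (M : Matrix m n R) (t : m → R) (y : n → A) :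
    bilinearForm M (fun i => t i • (1 : A)) y = ∑ j, (Mᵀ *ᵥ t) j • y j := by
  simp only [bilinearForm, smul_mul_assoc, one_mul, smul_smul, mulVec, dotProduct,
    transpose_apply, Finset.sum_smul]
  exact Finset.sum_comm

theorem bilinearForm_smul_one_right (M : Matrix m n R) (x : m → A) (t : n → R) :
    bilinearForm M x (fun j => t j • (1 : A)) = ∑ i, (M *ᵥ t) i • x i := by
  simp only [bilinearForm, mul_smul_comm, mul_one, smul_smul, mulVec, dotProduct,
    Finset.sum_smul]

end BilinearForm

section Commutator

theorem lie_mul_eq_lie_mul_add_mul_lie {A : Type*} [NonUnitalRing A] (q x y : A) :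
    ⁅q, x * y⁆ = ⁅q, x⁆ * y + x * ⁅q, y⁆ := by
  simp only [Ring.lie_def]
  noncomm_ring

theorem mul_lie_eq_lie_mul_add_mul_lie {A : Type*} [NonUnitalRing A] (x y q : A) :
    ⁅x * y, q⁆ = ⁅x, q⁆ * y + x * ⁅y, q⁆ := by
  simp only [Ring.lie_def]
  noncomm_ring

variable {R A m n p : Type*} [CommSemiring R] [Ring A] [Algebra R A]
  [Fintype m] [Fintype n] [Fintype p]

theorem lie_bilinearForm (q : A) (M : Matrix m n R) (x : m → A) (y : n → A) :
    ⁅q, bilinearForm M x y⁆ =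
      bilinearForm M (fun i => ⁅q, x i⁆) y + bilinearForm M x (fun j => ⁅q, y j⁆) := by
  have expand : ⁅q, bilinearForm M x y⁆ = ∑ i, ∑ j, M i j • ⁅q, x i * y j⁆ := by
    simp only [bilinearForm, Ring.lie_def, Finset.mul_sum, Finset.sum_mul, mul_smul_comm,
      smul_mul_assoc, smul_sub, Finset.sum_sub_distrib]
  rw [expand]
  simp only [lie_mul_eq_lie_mul_add_mul_lie, smul_add, Finset.sum_add_distrib, bilinearForm]

theorem bilinearForm_lie (M : Matrix m n R) (x : m → A) (y : n → A) (q : A) :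
    ⁅bilinearForm M x y, q⁆ =
      bilinearForm M (fun i => ⁅x i, q⁆) y + bilinearForm M x (fun j => ⁅y j, q⁆) := by
  have expand : ⁅bilinearForm M x y, q⁆ = ∑ i, ∑ j, M i j • ⁅x i * y j, q⁆ := by
    simp only [bilinearForm, Ring.lie_def, Finset.mul_sum, Finset.sum_mul, mul_smul_comm,
      smul_mul_assoc, smul_sub, Finset.sum_sub_distrib]
  rw [expand]
  simp only [mul_lie_eq_lie_mul_add_mul_lie, smul_add, Finset.sum_add_distrib, bilinearForm]

theorem bilinearForm_self_lie_of_lie_eq_smul_one (F : Matrix p p R) (a : p → A) {x : A} {t : p → R}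
    (hax : ∀ j, ⁅a j, x⁆ = t j • (1 : A)) :
    ⁅bilinearForm F a a, x⁆ = ∑ j, ((F + Fᵀ) *ᵥ t) j • a j := by
  simp only [bilinearForm_lie, hax, bilinearForm_smul_one_left, bilinearForm_smul_one_right,
    add_mulVec, Pi.add_apply, add_smul, Finset.sum_add_distrib]
  exact add_comm _ _

theorem commutator_quadratic_bilinear_form_general (a : p → A) (c : m → A) (d : n → A)
    (Θ₁ : Matrix p m R) (Θ₂ : Matrix p n R)
    (hac : ∀ j l, ⁅a j, c l⁆ = Θ₁ j l • (1 : A)) (had : ∀ j r, ⁅a j, d r⁆ = Θ₂ j r • (1 : A))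
    (F : Matrix p p R) (G : Matrix m n R) :
    ⁅bilinearForm F a a, bilinearForm G c d⁆ =
      bilinearForm ((F + Fᵀ) * Θ₁ * G) a d + bilinearForm (G * Θ₂ᵀ * (F + Fᵀ)) c a := by
  have symm : (F + Fᵀ)ᵀ = F + Fᵀ := isSymm_add_transpose_self F
  have lie_c l : ⁅bilinearForm F a a, c l⁆ = ∑ j, ((F + Fᵀ) * Θ₁)ᵀ l j • a j :=
    bilinearForm_self_lie_of_lie_eq_smul_one F a fun j => hac j l
  have lie_d r : ⁅bilinearForm F a a, d r⁆ = ∑ j, ((F + Fᵀ) * Θ₂)ᵀ r j • a j :=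
    bilinearForm_self_lie_of_lie_eq_smul_one F a fun j => had j r
  calc ⁅bilinearForm F a a, bilinearForm G c d⁆
      = bilinearForm G (fun l => ∑ j, ((F + Fᵀ) * Θ₁)ᵀ l j • a j) d
        + bilinearForm G c (fun r => ∑ j, ((F + Fᵀ) * Θ₂)ᵀ r j • a j) := by
        simp only [lie_bilinearForm, lie_c, lie_d]
    _ = bilinearForm ((F + Fᵀ) * Θ₁ * G) a d + bilinearForm (G * Θ₂ᵀ * (F + Fᵀ)) c a := by
        rw [bilinearForm_sum_smul_left, bilinearForm_sum_smul_right, transpose_transpose,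
          transpose_mul, symm, Matrix.mul_assoc G]

end Commutator

/-- Commutator of a quadratic form `aᵀFa` with a bilinear form `cᵀGd`, for families of
elements of a unital associative `ℂ`-algebra whose relevant commutators are scalar
multiples of the identity (Lemma A.1, equation (quadcom2)). -/
theorem commutator_quadratic_bilinear_form
    {A : Type*} [Ring A] [Algebra ℂ A] {p u v : ℕ}
    (a : Fin p → A) (c : Fin u → A) (d : Fin v → A)
    (haa : ∀ j k, ∃ z : ℂ, a j * a k - a k * a j = z • (1 : A))
    (Θ11 : Matrix (Fin p) (Fin u) ℝ) (Θ12 : Matrix (Fin p) (Fin v) ℝ)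
    (hac : ∀ j ℓ, a j * c ℓ - c ℓ * a j = (2 * Complex.I * (Θ11 j ℓ : ℂ)) • (1 : A))
    (had : ∀ j r, a j * d r - d r * a j = (2 * Complex.I * (Θ12 j r : ℂ)) • (1 : A))
    (F : Matrix (Fin p) (Fin p) ℂ) (G : Matrix (Fin u) (Fin v) ℂ) :
    (∑ j, ∑ k, F j k • (a j * a k)) * (∑ l, ∑ r, G l r • (c l * d r))
      - (∑ l, ∑ r, G l r • (c l * d r)) * (∑ j, ∑ k, F j k • (a j * a k))
    = (4 * Complex.I) •
        ( (∑ j, ∑ r, (((1 : ℂ) / 2) • (F + Fᵀ) * Θ11.map Complex.ofReal * G) j r • (a j * d r))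
        + (∑ l, ∑ j, (G * (Θ12.map Complex.ofReal)ᵀ * (((1 : ℂ) / 2) • (F + Fᵀ))) l j
            • (c l * a j)) ) := by
  have scalar : 4 * Complex.I * (1 / 2) = 2 * Complex.I := by ring
  change ⁅bilinearForm F a a, bilinearForm G c d⁆ = (4 * Complex.I) • (bilinearForm _ a d +
    bilinearForm _ c a)
  rw [commutator_quadratic_bilinear_form_general a c d ((2 * Complex.I) • Θ11.map Complex.ofReal)
    ((2 * Complex.I) • Θ12.map Complex.ofReal) hac had]
  simp only [transpose_smul, Matrix.smul_mul, Matrix.mul_smul, bilinearForm_smul, ← smul_add,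
    smul_smul, scalar]
end

section
/- Let r ≥ 2, and let N : ℝ → [0, +∞) be a measurable, bounded, integrable function. Then for every t > 0, ∫_{[0,t]^r} ∏_{j=1}^{r} N(t_j − t_{j+1}) dt₁ ⋯ dt_r ≤ t · N^{*r}(0), where t_{r+1} := t₁ and N^{*r}(0) := ∫_{ℝ^{r−1}} ∏_{j=1}^{r} N(τ_j − τ_{j+1}) dτ₂ ⋯ dτ_r is the r-fold self-convolution of N evaluated at 0 (with the conventions τ₁ := 0 and τ_{r+1} := 0). -/
/-!
The cyclic product `∏ j, N j (x j - x (j + 1))` does not change when all coordinates of `x` are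
translated by the same element. Enlarging the box to the strip where only the first coordinate is
confined to `s`, and translating the other coordinates by the first one, turns the integral into
that of a function constant in the first coordinate: it is exactly `μ s` times the integral over the
slice `x 0 = 0`, which is the convolution. The comparison of box and strip requires integrability on
the slice: the factor `N 0` is bounded, and the arguments of the others are consecutive differences,
which form a measure-preserving change of variables.
-/

open MeasureTheory

section FinCons

variable {n : ℕ}

lemma measurePreserving_finCons {α : Fin (n + 1) → Type*} [∀ i, MeasurableSpace (α i)]
    (μ : ∀ i, Measure (α i)) [∀ i, SigmaFinite (μ i)] :
    MeasurePreserving (fun p : α 0 × (∀ i : Fin n, α i.succ) ↦ (Fin.cons p.1 p.2 : ∀ i, α i))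
      ((μ 0).prod (.pi fun i ↦ μ i.succ)) (.pi μ) := by
  simpa only [MeasurableEquiv.piFinSuccAbove_symm_apply, Fin.insertNthEquiv_zero] using!
    (measurePreserving_piFinSuccAbove μ 0).symm

lemma finCons_add_one {α : Type*} (a : α) (τ : Fin n → α) (j : Fin (n + 1)) :
    (Fin.cons a τ : Fin (n + 1) → α) (j + 1) = (Fin.snoc τ a : Fin (n + 1) → α) j := by
  simp only [Fin.snoc_eq_cons_rotate, finRotate_apply]

lemma measurable_finSnoc {α : Type*} [MeasurableSpace α] (a : α) (j : Fin (n + 1)) :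
    Measurable fun τ : Fin n → α ↦ (Fin.snoc τ a : Fin (n + 1) → α) j := by
  cases j using Fin.lastCases
  · simpa only [Fin.snoc_last] using measurable_const
  · simpa only [Fin.snoc_castSucc] using measurable_pi_apply _

end FinCons

section Translation

lemma apply_finCons_add_right {n : ℕ} {G β : Type*} [AddGroup G] {F : (Fin (n + 1) → G) → β}
    (hinv : ∀ x a, F (fun i ↦ x i + a) = F x) (a : G) (τ : Fin n → G) :
    F (Fin.cons a fun i ↦ τ i + a) = F (Fin.cons 0 τ) := by
  rw [← hinv (Fin.cons 0 τ) a]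
  congr 1
  ext i
  cases i using Fin.cases <;> simp

variable {n : ℕ} {G : Type*} [AddGroup G] [MeasurableSpace G] [MeasurableAdd₂ G]
  (μ : Measure G) [SigmaFinite μ] [μ.IsAddRightInvariant]

lemma measurePreserving_finCons_add_right :
    MeasurePreserving
      (fun p : G × (Fin n → G) ↦ (Fin.cons p.1 fun i ↦ p.2 i + p.1 : Fin (n + 1) → G))
      (μ.prod (.pi fun _ ↦ μ)) (.pi fun _ ↦ μ) := by
  have shear : MeasurePreserving (fun p : G × (Fin n → G) ↦ (p.1, fun i ↦ p.2 i + p.1))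
      (μ.prod (.pi fun _ ↦ μ)) (μ.prod (.pi fun _ ↦ μ)) :=
    (MeasurePreserving.id μ).skew_product (g := fun a (τ : Fin n → G) i ↦ τ i + a) (by fun_prop)
      (.of_forall fun a ↦ map_add_right_eq_self _ fun _ ↦ a)
  exact (measurePreserving_finCons fun _ ↦ μ).comp shear

lemma measurePreserving_finCons_add_right_restrict {s : Set G} (hs : MeasurableSet s) :
    MeasurePreserving
      (fun p : G × (Fin n → G) ↦ (Fin.cons p.1 fun i ↦ p.2 i + p.1 : Fin (n + 1) → G))
      ((μ.restrict s).prod (.pi fun _ ↦ μ))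
      ((Measure.pi fun _ ↦ μ).restrict {x | x 0 ∈ s}) := by
  have measurableSet_strip : MeasurableSet {x : Fin (n + 1) → G | x 0 ∈ s} :=
    measurable_pi_apply 0 hs
  have preimage_strip :
      (fun p : G × (Fin n → G) ↦ (Fin.cons p.1 fun i ↦ p.2 i + p.1 : Fin (n + 1) → G)) ⁻¹'
        {x | x 0 ∈ s} = s ×ˢ Set.univ := by
    ext p
    simp
  simpa only [preimage_strip, ← Measure.prod_restrict, Measure.restrict_univ] using
    (measurePreserving_finCons_add_right μ).restrict_preimage measurableSet_strip

variable {E : Type*} [NormedAddCommGroup E] {F : (Fin (n + 1) → G) → E}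

lemma integrableOn_apply_zero_mem (hF : AEStronglyMeasurable F (.pi fun _ ↦ μ))
    (hinv : ∀ x a, F (fun i ↦ x i + a) = F x)
    (hint : Integrable (fun τ : Fin n → G ↦ F (Fin.cons 0 τ)) (.pi fun _ ↦ μ))
    {s : Set G} (hs : MeasurableSet s) (hμs : μ s ≠ ⊤) :
    IntegrableOn F {x | x 0 ∈ s} (.pi fun _ ↦ μ) := by
  have : IsFiniteMeasure (μ.restrict s) := isFiniteMeasure_restrict.2 hμs
  rw [IntegrableOn,
    ← (measurePreserving_finCons_add_right_restrict μ hs).integrable_comp hF.restrict]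
  simpa only [Function.comp_def, apply_finCons_add_right hinv] using hint.comp_snd (μ.restrict s)

lemma setIntegral_apply_zero_mem [NormedSpace ℝ E] (hF : AEStronglyMeasurable F (.pi fun _ ↦ μ))
    (hinv : ∀ x a, F (fun i ↦ x i + a) = F x) {s : Set G} (hs : MeasurableSet s) :
    ∫ x in {x | x 0 ∈ s}, F x ∂.pi (fun _ ↦ μ)
      = μ.real s • ∫ τ : Fin n → G, F (Fin.cons 0 τ) ∂.pi fun _ ↦ μ := by
  have shear := measurePreserving_finCons_add_right_restrict (n := n) μ hs
  rw [← shear.map_eq, integral_map shear.aemeasurable (shear.map_eq ▸ hF.restrict)]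
  simp only [apply_finCons_add_right hinv]
  rw [integral_fun_snd fun τ : Fin n → G ↦ F (Fin.cons 0 τ), measureReal_restrict_apply_univ]

lemma setIntegral_pi_le_of_add_right_invariant {F : (Fin (n + 1) → G) → ℝ}
    (hF : AEStronglyMeasurable F (.pi fun _ ↦ μ))
    (hnonneg : 0 ≤ᵐ[Measure.pi fun _ ↦ μ] F) (hinv : ∀ x a, F (fun i ↦ x i + a) = F x)
    (hint : Integrable (fun τ : Fin n → G ↦ F (Fin.cons 0 τ)) (.pi fun _ ↦ μ))
    {s : Set G} (hs : MeasurableSet s) (hμs : μ s ≠ ⊤) :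
    ∫ x in Set.univ.pi fun _ ↦ s, F x ∂.pi (fun _ ↦ μ)
      ≤ μ.real s * ∫ τ : Fin n → G, F (Fin.cons 0 τ) ∂.pi fun _ ↦ μ := by
  have box_subset : (Set.univ.pi fun _ ↦ s) ⊆ {x : Fin (n + 1) → G | x 0 ∈ s} :=
    fun x hx ↦ hx 0 (Set.mem_univ 0)
  calc ∫ x in Set.univ.pi fun _ ↦ s, F x ∂.pi (fun _ ↦ μ)
      ≤ ∫ x in {x | x 0 ∈ s}, F x ∂.pi (fun _ ↦ μ) :=
        setIntegral_mono_set (integrableOn_apply_zero_mem μ hF hinv hint hs hμs)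
          (ae_restrict_of_ae hnonneg) box_subset.eventuallyLE
    _ = μ.real s * ∫ τ : Fin n → G, F (Fin.cons 0 τ) ∂.pi fun _ ↦ μ :=
        setIntegral_apply_zero_mem μ hF hinv hs

end Translation

section CyclicProduct

variable {n : ℕ} {G : Type*} [AddGroup G] [MeasurableSpace G] [MeasurableAdd₂ G] [MeasurableNeg G]
  (μ : Measure G) [SigmaFinite μ] [μ.IsAddRightInvariant]

lemma measurePreserving_sub_finSnoc_succ (a : G) :
    MeasurePreserving
      (fun (τ : Fin n → G) (i : Fin n) ↦ τ i - (Fin.snoc τ a : Fin (n + 1) → G) i.succ)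
      (.pi fun _ ↦ μ) (.pi fun _ ↦ μ) := by
  induction n with
  | zero => convert MeasurePreserving.id _
  | succ n ih =>
    have shear : MeasurePreserving (fun p : (Fin n → G) × G ↦
        (fun i ↦ p.1 i - (Fin.snoc p.1 a : Fin (n + 1) → G) i.succ,
          p.2 - (Fin.snoc p.1 a : Fin (n + 1) → G) 0))
        ((Measure.pi fun _ ↦ μ).prod μ) ((Measure.pi fun _ ↦ μ).prod μ) :=
      ih.skew_product (g := fun τ b ↦ b - (Fin.snoc τ a : Fin (n + 1) → G) 0)
        (measurable_snd.sub ((measurable_finSnoc a 0).comp measurable_fst))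
        (.of_forall fun τ ↦ (measurePreserving_sub_right μ _).map_eq)
    have split := Measure.measurePreserving_swap.comp
      (measurePreserving_piFinSuccAbove (fun _ : Fin (n + 1) ↦ μ) 0)
    convert (measurePreserving_finCons fun _ ↦ μ).comp
      (Measure.measurePreserving_swap.comp (shear.comp split)) using 1
    ext τ i
    rw [← Fin.cons_self_tail τ, ← Fin.cons_snoc_eq_snoc_cons]
    cases i using Fin.cases <;> simp

variable {𝕜 : Type*} [RCLike 𝕜]

lemma integrable_prod_sub_finCons {N : Fin (n + 1) → G → 𝕜}
    (hmeas : Measurable (N 0)) {C : ℝ} (hbdd : ∀ x, ‖N 0 x‖ ≤ C)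
    (hint : ∀ i : Fin n, Integrable (N i.succ) μ) (a : G) :
    Integrable (fun τ : Fin n → G ↦ ∏ j, N j ((Fin.cons a τ : Fin (n + 1) → G) j
      - (Fin.cons a τ : Fin (n + 1) → G) (j + 1))) (.pi fun _ ↦ μ) := by
  have chain_integrable := (measurePreserving_sub_finSnoc_succ μ a).integrable_comp_of_integrable
    (Integrable.fintype_prod hint)
  simp only [finCons_add_one, Fin.prod_univ_succ, Fin.cons_zero, Fin.cons_succ]
  exact chain_integrable.bdd_mul
    (hmeas.comp (measurable_const.sub (measurable_finSnoc a 0))).aestronglyMeasurable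
    (.of_forall fun _ ↦ hbdd _)

theorem cyclic_integral_le_convolution_general (N : Fin (n + 1) → G → ℝ)
    (hmeas : ∀ j, Measurable (N j)) (hbdd : ∃ C, ∀ x, N 0 x ≤ C)
    (hint : ∀ i : Fin n, Integrable (N i.succ) μ) (hnonneg : ∀ j x, 0 ≤ N j x)
    {s : Set G} (hs : MeasurableSet s) (hμs : μ s ≠ ⊤) :
    ∫ x in Set.univ.pi fun _ ↦ s, ∏ j, N j (x j - x (j + 1)) ∂.pi (fun _ ↦ μ)
      ≤ μ.real s * ∫ τ : Fin n → G, ∏ j, N j ((Fin.cons 0 τ : Fin (n + 1) → G) j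
          - (Fin.cons 0 τ : Fin (n + 1) → G) (j + 1)) ∂.pi fun _ ↦ μ := by
  obtain ⟨C, hC⟩ := hbdd
  have norm_le (x : G) : ‖N 0 x‖ ≤ C := by
    rw [Real.norm_of_nonneg (hnonneg 0 x)]
    exact hC x
  have measurable_cyclic : Measurable fun x : Fin (n + 1) → G ↦ ∏ j, N j (x j - x (j + 1)) := by
    fun_prop
  exact setIntegral_pi_le_of_add_right_invariant μ measurable_cyclic.aestronglyMeasurable
    (.of_forall fun x ↦ Finset.prod_nonneg fun j _ ↦ hnonneg j _)
    (fun x a ↦ by simp only [add_sub_add_right_eq_sub])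
    (integrable_prod_sub_finCons μ (hmeas 0) norm_le hint 0) hs hμs

end CyclicProduct

/-- For a measurable, bounded, integrable, nonnegative function `N` on `ℝ` and `r = m + 2 ≥ 2`,
the cyclic `r`-fold integral over `[0,t]^r` of `∏_j N(t_j - t_{j+1})` (indices mod `r`) is at
most `t` times the `r`-fold self-convolution of `N` evaluated at `0`, written as an integral
over `ℝ^{r-1}` with the convention `τ₁ = 0`. -/
theorem cyclic_integral_le_convolution
    {m : ℕ} (N : ℝ → ℝ)
    (hmeas : Measurable N)
    (hbdd : ∃ C : ℝ, ∀ t : ℝ, N t ≤ C)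
    (hint : Integrable N)
    (hnonneg : ∀ t : ℝ, 0 ≤ N t)
    (t : ℝ) (ht : 0 < t) :
    (∫ ts : Fin (m + 2) → ℝ in Set.univ.pi (fun _ => Set.Icc 0 t),
        ∏ j : Fin (m + 2), N (ts j - ts (j + 1)))
      ≤ t * ∫ τ : Fin (m + 1) → ℝ,
          ∏ j : Fin (m + 2),
            N ((Fin.cons 0 τ : Fin (m + 2) → ℝ) j - (Fin.cons 0 τ : Fin (m + 2) → ℝ) (j + 1)) := by
  simpa [Real.volume_real_Icc, ht.le, volume_pi] using
    cyclic_integral_le_convolution_general volume (fun _ ↦ N) (fun _ ↦ hmeas) hbdd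
      (fun _ ↦ hint) (fun _ ↦ hnonneg) (measurableSet_Icc (a := 0) (b := t)) measure_Icc_lt_top.ne
end

section
/- Let n, α, μ > 0 be real numbers and let ε ≥ nα. Then the infimum over θ ∈ [0, μ/(4α)) of the function θ ↦ (n/2)(μ − √(μ² − 4θαμ)) − θε equals (nμ/4)(2 − nα/ε − ε/(nα)), and it is attained at θ = (μ/(4α))(1 − (nα/ε)²). -/
/-!
In the variable `s = √(μ² - 4θαμ)`, i.e. `θ = (μ² - s²) / (4αμ)`, the objective is a quadratic,
and completing the square shows that it exceeds the claimed infimum by exactly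
`ε / (4αμ) * (s - nαμ/ε)²`. The minimizer `s = nαμ/ε` corresponds to the stated `θ`, which is
nonnegative precisely when `nα ≤ ε`.
-/

/-- The exponent minimized over `θ` in a Chernoff bound `exp (Λ(θ) - θε)` with
`Λ(θ) = (n/2)(μ - √(μ² - 4θαμ))`. It is meaningful for `θ ≤ μ/(4α)` (with `α, μ > 0`);
beyond that `Real.sqrt` takes the value `0`. -/
noncomputable def chernoffExponent (n α μ ε θ : ℝ) : ℝ :=
  (n / 2) * (μ - √(μ ^ 2 - 4 * θ * α * μ)) - θ * ε

/-- The value of `θ` at which `chernoffExponent n α μ ε` is smallest. -/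
noncomputable def chernoffMinimizer (n α μ ε : ℝ) : ℝ :=
  (μ / (4 * α)) * (1 - (n * α / ε) ^ 2)

/-- The smallest value of `chernoffExponent n α μ ε` on `θ ≤ μ/(4α)`. -/
noncomputable def chernoffMinimum (n α μ ε : ℝ) : ℝ :=
  (n * μ / 4) * (2 - n * α / ε - ε / (n * α))

section

variable {n α μ ε θ : ℝ}

theorem chernoffExponent_sub_chernoffMinimum (hn : n ≠ 0) (hα : α ≠ 0) (hμ : μ ≠ 0) (hε : ε ≠ 0)
    (hθ : 0 ≤ μ ^ 2 - 4 * θ * α * μ) :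
    chernoffExponent n α μ ε θ - chernoffMinimum n α μ ε
      = ε / (4 * α * μ) * (√(μ ^ 2 - 4 * θ * α * μ) - n * α * μ / ε) ^ 2 := by
  unfold chernoffExponent chernoffMinimum
  have sq_s := Real.sq_sqrt hθ
  set s := √(μ ^ 2 - 4 * θ * α * μ)
  have θ_eq : θ = (μ ^ 2 - s ^ 2) / (4 * α * μ) := by
    rw [sq_s]
    field_simp
    ring
  rw [θ_eq]
  field_simp
  ring

theorem radicand_chernoffMinimizer (hα : α ≠ 0) :
    μ ^ 2 - 4 * chernoffMinimizer n α μ ε * α * μ = (n * α * μ / ε) ^ 2 := by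
  unfold chernoffMinimizer
  field_simp
  ring

theorem chernoffMinimizer_lt (hn : n ≠ 0) (hα : 0 < α) (hμ : 0 < μ) (hε : ε ≠ 0) :
    chernoffMinimizer n α μ ε < μ / (4 * α) :=
  mul_lt_of_lt_one_right (by positivity) (sub_lt_self 1 (by positivity))

theorem chernoffMinimizer_nonneg_iff (hn : 0 ≤ n) (hα : 0 < α) (hμ : 0 < μ) (hε : 0 < ε) :
    0 ≤ chernoffMinimizer n α μ ε ↔ n * α ≤ ε := by
  have ratio_nonneg : 0 ≤ n * α / ε := by positivity
  rw [chernoffMinimizer, mul_nonneg_iff_of_pos_left (by positivity), sub_nonneg,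
    sq_le_one_iff₀ ratio_nonneg, div_le_one hε]

theorem chernoffExponent_chernoffMinimizer (hn : 0 < n) (hα : 0 < α) (hμ : 0 < μ) (hε : 0 < ε) :
    chernoffExponent n α μ ε (chernoffMinimizer n α μ ε) = chernoffMinimum n α μ ε := by
  have radicand_eq := radicand_chernoffMinimizer (n := n) (μ := μ) (ε := ε) hα.ne'
  have sqrt_eq : √(μ ^ 2 - 4 * chernoffMinimizer n α μ ε * α * μ) = n * α * μ / ε := by
    rw [radicand_eq, Real.sqrt_sq (by positivity)]
  rw [← sub_eq_zero, chernoffExponent_sub_chernoffMinimum hn.ne' hα.ne' hμ.ne' hε.ne'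
    (radicand_eq ▸ sq_nonneg _), sqrt_eq, sub_self, zero_pow two_ne_zero, mul_zero]

theorem chernoffMinimum_le_chernoffExponent (hn : n ≠ 0) (hα : 0 < α) (hμ : 0 < μ) (hε : 0 < ε)
    (hθ : θ ≤ μ / (4 * α)) :
    chernoffMinimum n α μ ε ≤ chernoffExponent n α μ ε θ := by
  have radicand_nonneg : 0 ≤ μ ^ 2 - 4 * θ * α * μ := by
    have : θ * (4 * α) ≤ μ := (le_div_iff₀ (by positivity)).mp hθ
    nlinarith
  rw [← sub_nonneg,
    chernoffExponent_sub_chernoffMinimum hn hα.ne' hμ.ne' hε.ne' radicand_nonneg]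
  positivity

theorem large_deviations_infimum_general (hn : 0 < n) (hα : 0 < α) (hμ : 0 < μ) (hε : 0 < ε) :
    chernoffMinimizer n α μ ε < μ / (4 * α) ∧
    (0 ≤ chernoffMinimizer n α μ ε ↔ n * α ≤ ε) ∧
    chernoffExponent n α μ ε (chernoffMinimizer n α μ ε) = chernoffMinimum n α μ ε ∧
    ∀ θ ≤ μ / (4 * α), chernoffMinimum n α μ ε ≤ chernoffExponent n α μ ε θ :=
  ⟨chernoffMinimizer_lt hn.ne' hα hμ hε.ne', chernoffMinimizer_nonneg_iff hn.le hα hμ hε,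
    chernoffExponent_chernoffMinimizer hn hα hμ hε,
    fun _ => chernoffMinimum_le_chernoffExponent hn.ne' hα hμ hε⟩

end

/-- For real `n, α, μ > 0` and `ε ≥ nα`, the infimum over `θ ∈ [0, μ/(4α))` of
`θ ↦ (n/2)(μ - √(μ² - 4θαμ)) - θε` equals `(nμ/4)(2 - nα/ε - ε/(nα))` and is attained
at `θ = (μ/(4α))(1 - (nα/ε)²)`. -/
theorem large_deviations_infimum
    (n α μ ε : ℝ) (hn : 0 < n) (hα : 0 < α) (hμ : 0 < μ) (hε : n * α ≤ ε) :
    (μ / (4 * α)) * (1 - (n * α / ε) ^ 2) ∈ Set.Ico 0 (μ / (4 * α)) ∧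
    (n / 2) * (μ - Real.sqrt (μ ^ 2 - 4 * ((μ / (4 * α)) * (1 - (n * α / ε) ^ 2)) * α * μ))
        - ((μ / (4 * α)) * (1 - (n * α / ε) ^ 2)) * ε
      = (n * μ / 4) * (2 - n * α / ε - ε / (n * α)) ∧
    (∀ θ ∈ Set.Ico 0 (μ / (4 * α)),
        (n * μ / 4) * (2 - n * α / ε - ε / (n * α))
          ≤ (n / 2) * (μ - Real.sqrt (μ ^ 2 - 4 * θ * α * μ)) - θ * ε) := by
  obtain ⟨lt_bound, nonneg_iff, attained, lower_bound⟩ :=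
    large_deviations_infimum_general hn hα hμ ((mul_pos hn hα).trans_le hε)
  exact ⟨⟨nonneg_iff.mpr hε, lt_bound⟩, attained, fun θ hθ => lower_bound θ hθ.2.le⟩
end

section
/- Let ξ and η be ℝⁿ-valued random vectors whose joint distribution (i.e., the distribution of the ℝ^{2n}-valued vector (ξ, η)) is Gaussian with zero mean, and let Π ∈ ℝ^{n×n} be symmetric. Then the covariance of the quadratic forms ξᵀΠξ and ηᵀΠη satisfies Cov(ξᵀΠξ, ηᵀΠη) = 2 Tr( Π C Π Cᵀ ), where C := E(ξ ηᵀ) is the cross-covariance matrix of ξ and η. -/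
open Matrix MeasureTheory ProbabilityTheory

/-!
Diagonalizing `A = ∑ cᵢ uᵢuᵢᵀ` and `B = ∑ dⱼ vⱼvⱼᵀ` turns the quadratic forms into the weighted sums
of squares `∑ cᵢ (uᵢ ⬝ᵥ ξ)²` and `∑ dⱼ (vⱼ ⬝ᵥ η)²`, and `Tr(A C B Cᵀ)` into
`∑ cᵢ dⱼ (uᵢ ⬝ᵥ C *ᵥ vⱼ)²`. By bilinearity of the covariance it remains to see that
`Cov(X², Y²) = 2 E[XY]²` for a centered Gaussian pair of real variables, and this follows by adding
the identities `E[Z⁴] = 3 E[Z²]²` for `Z = X + Y` and `Z = X - Y`. The fourth moment comes from the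
differential equation `M' t = v t M t` of the moment generating function of `gaussianReal 0 v`.
-/

namespace GaussianQuadraticForm

section Matrix

variable {ι κ R : Type*} [Fintype ι] [Fintype κ] [CommSemiring R]

lemma exists_eq_sum_smul_vecMulVec {A : Matrix ι ι ℝ} (hA : A.IsSymm) :
    ∃ (c : ι → ℝ) (u : ι → ι → ℝ), A = ∑ i, c i • vecMulVec (u i) (u i) := by
  classical
  have hA_herm : A.IsHermitian := (conjTranspose_eq_transpose_of_trivial A).trans hA
  refine ⟨hA_herm.eigenvalues, fun k i => hA_herm.eigenvectorBasis k i, ?_⟩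
  conv_lhs => rw [hA_herm.spectral_theorem, Unitary.conjStarAlgAut_apply]
  ext i j
  rw [mul_apply, Matrix.sum_apply]
  refine Finset.sum_congr rfl fun k _ => ?_
  rw [mul_diagonal]
  simp only [star_apply, star_trivial, IsHermitian.eigenvectorUnitary_apply, Function.comp_apply,
    RCLike.ofReal_real_eq_id, id_eq, Matrix.smul_apply, vecMulVec_apply, smul_eq_mul]
  ring

variable {τ σ : Type*} [Fintype τ] [Fintype σ]

lemma dotProduct_sum_smul_vecMulVec_mulVec (c : τ → R) (u : τ → ι → R) (x : ι → R) :
    x ⬝ᵥ (∑ i, c i • vecMulVec (u i) (u i)) *ᵥ x = ∑ i, c i * (u i ⬝ᵥ x) ^ 2 := by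
  simp only [sum_mulVec, smul_mulVec, vecMulVec_mulVec, dotProduct_sum, dotProduct_smul,
    op_smul_eq_smul, smul_eq_mul, sq, dotProduct_comm x (u _)]

lemma trace_vecMulVec_mul_mul_vecMulVec_mul (a : ι → R) (b : κ → R) (C : Matrix ι κ R) :
    (vecMulVec a a * C * vecMulVec b b * Cᵀ).trace = (a ⬝ᵥ C *ᵥ b) ^ 2 := by
  rw [vecMulVec_mul, vecMulVec_mul_vecMulVec, vecMulVec_mul, trace_vecMulVec,
    smul_vecMul, dotProduct_smul, vecMul_transpose, ← dotProduct_mulVec, smul_eq_mul, sq]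

lemma trace_sum_smul_vecMulVec_mul (c : τ → R) (u : τ → ι → R)
    (d : σ → R) (v : σ → κ → R) (C : Matrix ι κ R) :
    ((∑ i, c i • vecMulVec (u i) (u i)) * C * (∑ j, d j • vecMulVec (v j) (v j)) * Cᵀ).trace
      = ∑ i, ∑ j, c i * d j * (u i ⬝ᵥ C *ᵥ v j) ^ 2 := by
  simp only [Matrix.sum_mul, Matrix.mul_sum, trace_sum, Matrix.smul_mul, Matrix.mul_smul,
    trace_smul, trace_vecMulVec_mul_mul_vecMulVec_mul, smul_eq_mul, Finset.mul_sum]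
  rw [Finset.sum_comm]
  exact Finset.sum_congr rfl fun i _ => Finset.sum_congr rfl fun j _ => by ring

end Matrix

lemma integral_pow_add_two_gaussianReal (v : NNReal) (n : ℕ) :
    ∫ x, x ^ (n + 2) ∂gaussianReal 0 v = (n + 1) * v * ∫ x, x ^ n ∂gaussianReal 0 v := by
  set M : ℝ → ℝ := mgf id (gaussianReal 0 v) with hM
  have hM_eq : M = fun t => Real.exp (v * t ^ 2 / 2) := by simp [hM, mgf_id_gaussianReal]
  have hmoment (k : ℕ) : ∫ x, x ^ k ∂gaussianReal 0 v = iteratedDeriv k M 0 := by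
    rw [iteratedDeriv_mgf_zero (by simp)]; rfl
  have hderiv : deriv M = fun t => v * (t * M t) := by
    ext t
    have : HasDerivAt (fun t : ℝ => v * t ^ 2 / 2) (v * t) t :=
      (((hasDerivAt_pow 2 t).const_mul (v : ℝ)).div_const 2).congr_deriv (by ring)
    rw [hM_eq, this.exp.deriv]
    ring
  have hsmooth : ContDiffAt ℝ (n + 1 : ℕ) M 0 := by rw [hM_eq]; fun_prop
  have hleibniz : iteratedDeriv (n + 1) (fun t => t * M t) 0 = (n + 1) * iteratedDeriv n M 0 := by
    rw [iteratedDeriv_fun_mul (by fun_prop) hsmooth]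
    simp [iteratedDeriv_fun_id_zero]
  rw [hmoment, hmoment, iteratedDeriv_succ', hderiv, iteratedDeriv_const_mul_field, hleibniz]
  ring

section Pair

variable {Ω : Type*} {mΩ : MeasurableSpace Ω} {P : Measure Ω} {X Y : Ω → ℝ}

lemma memLp_mul (hX : HasGaussianLaw X P) (hY : HasGaussianLaw Y P) {p : ENNReal} (hp : p ≠ ⊤) :
    MemLp (fun ω => X ω * Y ω) p P := by
  have : ENNReal.HolderTriple (2 * p) (2 * p) p := ⟨by
    rw [ENNReal.mul_inv (by simp) (by simp), ← add_mul, ENNReal.inv_two_add_inv_two, one_mul]⟩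
  have hp2 : 2 * p ≠ ⊤ := ENNReal.mul_ne_top (by simp) hp
  exact (hY.memLp hp2).mul' (hX.memLp hp2)

lemma memLp_sq (hX : HasGaussianLaw X P) {p : ENNReal} (hp : p ≠ ⊤) :
    MemLp (fun ω => X ω ^ 2) p P := by
  simpa only [sq] using memLp_mul hX hX hp

lemma integrable_sq_mul_sq (hX : HasGaussianLaw X P) (hY : HasGaussianLaw Y P) :
    Integrable (fun ω => X ω ^ 2 * Y ω ^ 2) P :=
  (memLp_sq (p := 2) hX (by simp)).integrable_mul (memLp_sq (p := 2) hY (by simp))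

lemma integrable_pow_four (hX : HasGaussianLaw X P) : Integrable (fun ω => X ω ^ 4) P := by
  simpa only [← pow_add] using integrable_sq_mul_sq hX hX

lemma integral_pow_four (hX : HasGaussianLaw X P) (hX0 : P[X] = 0) :
    ∫ ω, X ω ^ 4 ∂P = 3 * (∫ ω, X ω ^ 2 ∂P) ^ 2 := by
  have hmoment (k : ℕ) : ∫ ω, X ω ^ k ∂P = ∫ x, x ^ k ∂gaussianReal 0 Var[X; P].toNNReal := by
    rw [← hX0, ← hX.map_eq_gaussianReal, integral_map hX.aemeasurable (by fun_prop)]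
  have htwo := integral_pow_add_two_gaussianReal Var[X; P].toNNReal 0
  have hfour := integral_pow_add_two_gaussianReal Var[X; P].toNNReal 2
  simp only [pow_zero, integral_const, probReal_univ, smul_eq_mul, Nat.cast_zero] at htwo
  rw [hmoment, hmoment, hfour, htwo]
  push_cast
  ring

lemma integral_add_sq (hX : MemLp X 2 P) (hY : MemLp Y 2 P) :
    ∫ ω, (X ω + Y ω) ^ 2 ∂P
      = ∫ ω, X ω ^ 2 ∂P + 2 * ∫ ω, X ω * Y ω ∂P + ∫ ω, Y ω ^ 2 ∂P := by
  have hXY : Integrable (fun ω => 2 * (X ω * Y ω)) P := (hX.integrable_mul hY).const_mul 2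
  have hX_XY : Integrable (fun ω => X ω ^ 2 + 2 * (X ω * Y ω)) P := hX.integrable_sq.add hXY
  simp only [add_sq, mul_assoc]
  rw [integral_add hX_XY hY.integrable_sq, integral_add hX.integrable_sq hXY, integral_const_mul]

lemma integral_add_pow_four_add_integral_sub_pow_four
    (h : HasGaussianLaw (fun ω => (X ω, Y ω)) P) :
    ∫ ω, (X ω + Y ω) ^ 4 ∂P + ∫ ω, (X ω - Y ω) ^ 4 ∂P
      = 2 * ∫ ω, X ω ^ 4 ∂P + 12 * ∫ ω, X ω ^ 2 * Y ω ^ 2 ∂P + 2 * ∫ ω, Y ω ^ 4 ∂P := by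
  have hXX := (integrable_pow_four h.fst).const_mul 2
  have hXY := (integrable_sq_mul_sq h.fst h.snd).const_mul 12
  have hYY := (integrable_pow_four h.snd).const_mul 2
  have hXX_XY : Integrable (fun ω => 2 * X ω ^ 4 + 12 * (X ω ^ 2 * Y ω ^ 2)) P := hXX.add hXY
  rw [← integral_add (integrable_pow_four h.fun_add) (integrable_pow_four h.fun_sub)]
  simp only [← integral_const_mul]
  rw [← integral_add hXX hXY, ← integral_add hXX_XY hYY]
  exact integral_congr_ae (.of_forall fun ω => by ring)

lemma integral_sq_mul_sq (h : HasGaussianLaw (fun ω => (X ω, Y ω)) P) (hX0 : P[X] = 0)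
    (hY0 : P[Y] = 0) :
    ∫ ω, X ω ^ 2 * Y ω ^ 2 ∂P
      = (∫ ω, X ω ^ 2 ∂P) * (∫ ω, Y ω ^ 2 ∂P) + 2 * (∫ ω, X ω * Y ω ∂P) ^ 2 := by
  have hadd := integral_pow_four h.fun_add (by
    rw [integral_add h.fst.integrable h.snd.integrable, hX0, hY0, add_zero])
  have hsub := integral_pow_four h.fun_sub (by
    rw [integral_sub h.fst.integrable h.snd.integrable, hX0, hY0, sub_zero])
  have hsub_sq := integral_add_sq h.fst.memLp_two h.snd.memLp_two.neg
  simp only [Pi.neg_apply, ← sub_eq_add_neg, neg_sq, mul_neg, integral_neg] at hsub_sq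
  rw [integral_add_sq h.fst.memLp_two h.snd.memLp_two] at hadd
  rw [hsub_sq] at hsub
  have hsum := integral_add_pow_four_add_integral_sub_pow_four h
  rw [hadd, hsub, integral_pow_four h.fst hX0, integral_pow_four h.snd hY0] at hsum
  linear_combination -hsum / 12

lemma covariance_sq_sq (h : HasGaussianLaw (fun ω => (X ω, Y ω)) P)
    (hX0 : P[X] = 0) (hY0 : P[Y] = 0) :
    cov[fun ω => X ω ^ 2, fun ω => Y ω ^ 2; P] = 2 * (∫ ω, X ω * Y ω ∂P) ^ 2 := by
  have := h.isProbabilityMeasure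
  rw [covariance_eq_sub (memLp_sq h.fst (by simp)) (memLp_sq h.snd (by simp))]
  exact sub_eq_of_eq_add' (integral_sq_mul_sq h hX0 hY0)

end Pair

section Vector

variable {Ω ι κ : Type*} {mΩ : MeasurableSpace Ω} {P : Measure Ω} [Fintype ι] [Fintype κ]
  {ξ : Ω → ι → ℝ} {η : Ω → κ → ℝ}

lemma hasGaussianLaw_dotProduct (h : HasGaussianLaw ξ P) (u : ι → ℝ) :
    HasGaussianLaw (fun ω => u ⬝ᵥ ξ ω) P := by
  classical
  exact h.map (dotProductEquiv ℝ ι u).toContinuousLinearMap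

lemma hasGaussianLaw_dotProduct_prodMk (h : HasGaussianLaw (fun ω => (ξ ω, η ω)) P)
    (u : ι → ℝ) (v : κ → ℝ) : HasGaussianLaw (fun ω => (u ⬝ᵥ ξ ω, v ⬝ᵥ η ω)) P := by
  classical
  exact h.map ((dotProductEquiv ℝ ι u).toContinuousLinearMap.prodMap
    (dotProductEquiv ℝ κ v).toContinuousLinearMap)

lemma hasGaussianLaw_prodMk_of_forall_dotProduct
    (h : ∀ u v, HasGaussianLaw (fun ω => u ⬝ᵥ ξ ω + v ⬝ᵥ η ω) P) :
    HasGaussianLaw (fun ω => (ξ ω, η ω)) P := by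
  classical
  have hξ : AEMeasurable ξ P := aemeasurable_pi_iff.2 fun i => by
    simpa using (h (Pi.single i 1) 0).aemeasurable
  have hη : AEMeasurable η P := aemeasurable_pi_iff.2 fun j => by
    simpa using (h 0 (Pi.single j 1)).aemeasurable
  refine ⟨isGaussian_of_isGaussian_map fun L => ?_⟩
  obtain ⟨u, hu⟩ := (dotProductEquiv ℝ ι).surjective (L ∘L .inl ℝ _ _)
  obtain ⟨v, hv⟩ := (dotProductEquiv ℝ κ).surjective (L ∘L .inr ℝ _ _)
  have hL : L ∘ (fun ω => (ξ ω, η ω)) = fun ω => u ⬝ᵥ ξ ω + v ⬝ᵥ η ω := by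
    ext ω
    have hu' : u ⬝ᵥ ξ ω = L (ξ ω, 0) := LinearMap.congr_fun hu (ξ ω)
    have hv' : v ⬝ᵥ η ω = L (0, η ω) := LinearMap.congr_fun hv (η ω)
    simp [hu', hv', ← map_add]
  rw [AEMeasurable.map_map_of_aemeasurable (by fun_prop) (hξ.prodMk hη), hL]
  exact (h u v).isGaussian_map

lemma integral_dotProduct (hξ : Integrable ξ P) (u : ι → ℝ) :
    ∫ ω, u ⬝ᵥ ξ ω ∂P = u ⬝ᵥ ∫ ω, ξ ω ∂P := by
  classical
  exact (dotProductEquiv ℝ ι u).toContinuousLinearMap.integral_comp_comm hξ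

lemma integral_eq_zero_iff_forall_dotProduct (hξ : Integrable ξ P) :
    P[ξ] = 0 ↔ ∀ u, ∫ ω, u ⬝ᵥ ξ ω ∂P = 0 := by
  simp only [integral_dotProduct hξ, dotProduct_comm _ P[ξ], dotProduct_eq_zero_iff]

lemma hasGaussianLaw_and_integral_eq_zero_of_map_dotProduct_eq
    (h : ∀ u v, ∃ σ2, P.map (fun ω => u ⬝ᵥ ξ ω + v ⬝ᵥ η ω) = gaussianReal 0 σ2) :
    HasGaussianLaw (fun ω => (ξ ω, η ω)) P ∧ P[ξ] = 0 ∧ P[η] = 0 := by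
  have hlaw (u v) : HasGaussianLaw (fun ω => u ⬝ᵥ ξ ω + v ⬝ᵥ η ω) P := by
    obtain ⟨_, h_eq⟩ := h u v
    exact ⟨h_eq ▸ inferInstance⟩
  have hmean (u v) : ∫ ω, (u ⬝ᵥ ξ ω + v ⬝ᵥ η ω) ∂P = 0 := by
    obtain ⟨_, h_eq⟩ := h u v
    have hmap := integral_map (f := fun x => x) (hlaw u v).aemeasurable (by fun_prop)
    rwa [h_eq, integral_id_gaussianReal, eq_comm] at hmap
  have hjoint := hasGaussianLaw_prodMk_of_forall_dotProduct hlaw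
  refine ⟨hjoint, (integral_eq_zero_iff_forall_dotProduct hjoint.fst.integrable).2 fun u => ?_,
    (integral_eq_zero_iff_forall_dotProduct hjoint.snd.integrable).2 fun v => ?_⟩
  · simpa using hmean u 0
  · simpa using hmean 0 v

lemma integral_dotProduct_mul_dotProduct (hξη : ∀ i j, Integrable (fun ω => ξ ω i * η ω j) P)
    (u : ι → ℝ) (v : κ → ℝ) :
    ∫ ω, (u ⬝ᵥ ξ ω) * (v ⬝ᵥ η ω) ∂P
      = u ⬝ᵥ (Matrix.of fun i j => ∫ ω, ξ ω i * η ω j ∂P) *ᵥ v := by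
  have hint (i j) : Integrable (fun ω => u i * ξ ω i * (v j * η ω j)) P := by
    simpa only [mul_mul_mul_comm] using (hξη i j).const_mul (u i * v j)
  simp only [dotProduct, mulVec, of_apply, Finset.sum_mul_sum]
  simp only [Finset.mul_sum]
  rw [integral_finsetSum _ fun i _ => integrable_finsetSum _ fun j _ => hint i j]
  refine Finset.sum_congr rfl fun i _ => ?_
  rw [integral_finsetSum _ fun j _ => hint i j]
  refine Finset.sum_congr rfl fun j _ => ?_
  rw [← integral_mul_const, ← integral_const_mul]
  exact integral_congr_ae (.of_forall fun ω => by ring)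

lemma memLp_dotProduct_mulVec (h : HasGaussianLaw ξ P) (A : Matrix ι ι ℝ) {p : ENNReal}
    (hp : p ≠ ⊤) : MemLp (fun ω => ξ ω ⬝ᵥ A *ᵥ ξ ω) p P :=
  memLp_finsetSum _ fun i _ => memLp_mul (h.eval i) (hasGaussianLaw_dotProduct h (A i)) hp

end Vector

end GaussianQuadraticForm

open GaussianQuadraticForm

theorem covariance_of_gaussian_quadratic_forms_general {Ω ι κ : Type*} {mΩ : MeasurableSpace Ω}
    {P : Measure Ω} [Fintype ι] [Fintype κ] {ξ : Ω → ι → ℝ} {η : Ω → κ → ℝ}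
    (h : HasGaussianLaw (fun ω => (ξ ω, η ω)) P) (hξ0 : P[ξ] = 0) (hη0 : P[η] = 0)
    {A : Matrix ι ι ℝ} {B : Matrix κ κ ℝ} (hA : A.IsSymm) (hB : B.IsSymm) :
    cov[fun ω => ξ ω ⬝ᵥ A *ᵥ ξ ω, fun ω => η ω ⬝ᵥ B *ᵥ η ω; P]
      = 2 * (A * (Matrix.of fun i j => ∫ ω, ξ ω i * η ω j ∂P)
              * B * (Matrix.of fun i j => ∫ ω, ξ ω i * η ω j ∂P)ᵀ).trace := by
  obtain ⟨c, u, rfl⟩ := exists_eq_sum_smul_vecMulVec hA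
  obtain ⟨d, v, rfl⟩ := exists_eq_sum_smul_vecMulVec hB
  have := h.isProbabilityMeasure
  have hgauss i j := hasGaussianLaw_dotProduct_prodMk h (u i) (v j)
  have hint i j : Integrable (fun ω => ξ ω i * η ω j) P :=
    (h.fst.eval i).memLp_two.integrable_mul (h.snd.eval j).memLp_two
  have hu0 i := (integral_eq_zero_iff_forall_dotProduct h.fst.integrable).1 hξ0 (u i)
  have hv0 j := (integral_eq_zero_iff_forall_dotProduct h.snd.integrable).1 hη0 (v j)
  simp only [dotProduct_sum_smul_vecMulVec_mulVec]
  rw [covariance_fun_sum_fun_sum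
    (fun i => (memLp_sq (hasGaussianLaw_dotProduct h.fst (u i)) (by simp)).const_mul (c i))
    (fun j => (memLp_sq (hasGaussianLaw_dotProduct h.snd (v j)) (by simp)).const_mul (d j)),
    trace_sum_smul_vecMulVec_mul]
  simp only [covariance_const_mul_left, covariance_const_mul_right,
    covariance_sq_sq (hgauss _ _) (hu0 _) (hv0 _), integral_dotProduct_mul_dotProduct hint,
    Finset.mul_sum]
  exact Finset.sum_congr rfl fun i _ => Finset.sum_congr rfl fun j _ => by ring

/-- For jointly Gaussian zero-mean random vectors `ξ, η` in `ℝⁿ` (every linear combination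
of their coordinates has a centered Gaussian distribution) and a symmetric matrix `W`,
`Cov(ξᵀWξ, ηᵀWη) = 2 Tr(W C W Cᵀ)` where `C = E(ξηᵀ)` is the cross-covariance matrix. -/
theorem covariance_of_gaussian_quadratic_forms
    {Ω : Type*} [MeasureSpace Ω] [IsProbabilityMeasure (ℙ : Measure Ω)]
    {n : ℕ} (ξ η : Ω → Fin n → ℝ)
    (hξ : Measurable ξ) (hη : Measurable η)
    (hGauss : ∀ u v : Fin n → ℝ, ∃ σ2 : NNReal,
      Measure.map (fun ω => u ⬝ᵥ ξ ω + v ⬝ᵥ η ω) ℙ = gaussianReal 0 σ2)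
    (W : Matrix (Fin n) (Fin n) ℝ) (hW : Wᵀ = W) :
    (∫ ω, (ξ ω ⬝ᵥ W.mulVec (ξ ω)) * (η ω ⬝ᵥ W.mulVec (η ω)))
        - (∫ ω, ξ ω ⬝ᵥ W.mulVec (ξ ω)) * (∫ ω, η ω ⬝ᵥ W.mulVec (η ω))
      = 2 * (W * (Matrix.of fun i j => ∫ ω, ξ ω i * η ω j)
              * W * (Matrix.of fun i j => ∫ ω, ξ ω i * η ω j)ᵀ).trace := by
  obtain ⟨h, hξ0, hη0⟩ := hasGaussianLaw_and_integral_eq_zero_of_map_dotProduct_eq hGauss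
  exact (covariance_eq_sub (memLp_dotProduct_mulVec h.fst W (by simp))
    (memLp_dotProduct_mulVec h.snd W (by simp))).symm.trans
    (covariance_of_gaussian_quadratic_forms_general h hξ0 hη0 hW hW)
end
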